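/- Under the stated assumptions, if the initial Hessian approximation is B₀ = aI for some a > 0 and Δ₁ := Tr(a∇²f(x_*)⁻¹/(1+D₀)) − d − log det(a∇²f(x_*)⁻¹/(1+D₀)), then for every t ≥ 1 the BFGS iterates satisfy (f(x_t) − f(x_*))/(f(x₀) − f(x_*)) ≤ (1 − α(1−β)·exp(−Δ₁/t)/(1+D₀)²)^t, and moreover for every t ≥ Δ₁, (f(x_t) − f(x_*))/(f(x₀) − f(x_*)) ≤ (1 − α(1−β)/(3(1+D₀)²))^t. -/

import Mathlib

/-!
BFGS is analysed in the geometry of the fixed matrix `P = (1 + D₀) ∇²f(x_*)`, through the potential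
`Ψ(P⁻¹ B_t)`, which is nonnegative (`Psi_nonneg`).

Strong self-concordance bounds the Hessian from below along rays from `x_*`. Hence every iterate
satisfies `M ‖x_t - x_*‖ ≤ D₀` in the norm of `∇²f(x_*)` (`ssc_omega_le`), and so does the segment
between two iterates. On that ball `∇²f ⪯ P`, and so the gradient difference `y` and the step `s`
obey `yᵀP⁻¹y ≤ sᵀy` (`gradient_diff_cocoercive`).

Put `λ_t = (gᵀs)² / (gᵀP⁻¹g · sᵀy)` with `g = ∇f(x_t)`. The trace and determinant formulas for the
update give `Ψ(P⁻¹ B_{t+1}) ≤ Ψ(P⁻¹ B_t) + log λ_t` (`Psi_bfgsUpdate_le`). Telescoping yields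
`∑ log λ_t ≥ -Ψ(P⁻¹ B₀) = -Δ₁`. On the other hand the Armijo–Wolfe conditions, together with the
gradient domination `f(x_t) - f(x_*) ≤ (1 + D₀)² gᵀP⁻¹g` (`gap_le_dual_norm`), show that step `t`
shrinks the gap by the factor `1 - α(1-β) λ_t / (1 + D₀)²`. A Jensen-type argument
(`linear_rate_of_sum_log`) turns the bound on `∑ log λ_t` into the first rate. The second rate
follows from `exp (-Δ₁/t) ≥ exp (-1) ≥ 1/3` when `t ≥ Δ₁`.

No integral of the Hessian appears: every integrated inequality is the monotonicity, on a segment,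
of a scalar function whose derivative is nonnegative (`le_of_hasDerivAt_nonneg`).
-/

open Matrix Real Finset

noncomputable section

/-- `ω(x) = x − log(1+x)`. -/
def omegaFn (x : ℝ) : ℝ := x - Real.log (1 + x)

/-- `Ψ(A) = Tr(A) − d − log det A`. -/
def Psi (d : ℕ) (A : Matrix (Fin d) (Fin d) ℝ) : ℝ :=
  A.trace - (d : ℝ) - Real.log A.det

/-- Loewner order: `A ⪯ B` iff `B − A` is positive semidefinite. -/
def loewnerLE {d : ℕ} (A B : Matrix (Fin d) (Fin d) ℝ) : Prop := (B - A).PosSemidef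

/-- The BFGS Hessian-approximation update
`B⁺ = B − (B s sᵀ B)/(sᵀ B s) + (y yᵀ)/(sᵀ y)`. -/
def bfgsUpdate {d : ℕ} (B : Matrix (Fin d) (Fin d) ℝ) (s y : Fin d → ℝ) :
    Matrix (Fin d) (Fin d) ℝ :=
  B - (s ⬝ᵥ (B *ᵥ s))⁻¹ • vecMulVec (B *ᵥ s) (Bᵀ *ᵥ s) + (s ⬝ᵥ y)⁻¹ • vecMulVec y y

/-- `M`-strong self-concordance of a Hessian field:
`∇²f(x) − ∇²f(y) ⪯ M‖x−y‖_z ∇²f(y)` for all `x, y, z`. -/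
def StronglySelfConcordant {d : ℕ} (hess : (Fin d → ℝ) → Matrix (Fin d) (Fin d) ℝ)
    (M : ℝ) : Prop :=
  ∀ x y z : Fin d → ℝ,
    loewnerLE (hess x - hess y)
      ((M * Real.sqrt ((x - y) ⬝ᵥ (hess z *ᵥ (x - y)))) • hess y)


/-! ### Quadratic forms of real positive definite matrices -/

section QuadraticForms

variable {d : ℕ} {H P B : Matrix (Fin d) (Fin d) ℝ}

lemma posDef_transpose (hH : H.PosDef) : Hᵀ = H := by
  have := hH.isHermitian
  rwa [Matrix.IsHermitian, conjTranspose_eq_transpose_of_trivial] at this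

lemma posDef_dot_comm (hH : H.PosDef) (u v : Fin d → ℝ) :
    u ⬝ᵥ (H *ᵥ v) = v ⬝ᵥ (H *ᵥ u) := by
  rw [dotProduct_mulVec, dotProduct_comm, ← mulVec_transpose, posDef_transpose hH]

lemma posDef_dot_pos (hH : H.PosDef) {v : Fin d → ℝ} (hv : v ≠ 0) :
    0 < v ⬝ᵥ (H *ᵥ v) := by
  simpa using hH.dotProduct_mulVec_pos hv

lemma posDef_dot_nonneg (hH : H.PosDef) (v : Fin d → ℝ) :
    0 ≤ v ⬝ᵥ (H *ᵥ v) := by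
  simpa using hH.posSemidef.dotProduct_mulVec_nonneg v

lemma posDef_mul_inv (hH : H.PosDef) : H * H⁻¹ = 1 :=
  Matrix.mul_nonsing_inv _ ((Matrix.isUnit_iff_isUnit_det _).1 hH.isUnit)

lemma posDef_inv_mul (hH : H.PosDef) : H⁻¹ * H = 1 :=
  Matrix.nonsing_inv_mul _ ((Matrix.isUnit_iff_isUnit_det _).1 hH.isUnit)

lemma quad_sub_smul (hH : H.PosDef) (u v : Fin d → ℝ) (c : ℝ) :
    (u - c • v) ⬝ᵥ (H *ᵥ (u - c • v)) =
      u ⬝ᵥ (H *ᵥ u) - 2 * c * (u ⬝ᵥ (H *ᵥ v)) + c ^ 2 * (v ⬝ᵥ (H *ᵥ v)) := by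
  simp only [mulVec_sub, mulVec_smul, sub_dotProduct, dotProduct_sub, smul_dotProduct,
    dotProduct_smul, smul_eq_mul, posDef_dot_comm hH v u]
  ring

lemma posDef_cauchy_schwarz (hH : H.PosDef) (u v : Fin d → ℝ) :
    (u ⬝ᵥ (H *ᵥ v)) ^ 2 ≤ (u ⬝ᵥ (H *ᵥ u)) * (v ⬝ᵥ (H *ᵥ v)) := by
  by_cases hv : v = 0
  · simp [hv]
  have h1 := posDef_dot_pos hH hv
  have h2 := posDef_dot_nonneg hH (u - ((u ⬝ᵥ (H *ᵥ v)) / (v ⬝ᵥ (H *ᵥ v))) • v)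
  rw [quad_sub_smul hH] at h2
  have h3 : (u ⬝ᵥ (H *ᵥ v)) ^ 2 / (v ⬝ᵥ (H *ᵥ v)) ≤ u ⬝ᵥ (H *ᵥ u) := by
    have : u ⬝ᵥ (H *ᵥ u) - 2 * ((u ⬝ᵥ (H *ᵥ v)) / (v ⬝ᵥ (H *ᵥ v))) * (u ⬝ᵥ (H *ᵥ v)) +
      ((u ⬝ᵥ (H *ᵥ v)) / (v ⬝ᵥ (H *ᵥ v))) ^ 2 * (v ⬝ᵥ (H *ᵥ v)) =
      u ⬝ᵥ (H *ᵥ u) - (u ⬝ᵥ (H *ᵥ v)) ^ 2 / (v ⬝ᵥ (H *ᵥ v)) := by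
      field_simp
      ring
    linarith
  rwa [div_le_iff₀ h1] at h3

/-- Cauchy–Schwarz between the norm of `P` and its dual norm. -/
lemma posDef_dual_cauchy_schwarz (hP : P.PosDef) (g v : Fin d → ℝ) :
    (g ⬝ᵥ v) ^ 2 ≤ (g ⬝ᵥ (P⁻¹ *ᵥ g)) * (v ⬝ᵥ (P *ᵥ v)) := by
  have h := posDef_cauchy_schwarz hP (P⁻¹ *ᵥ g) v
  have e : P *ᵥ (P⁻¹ *ᵥ g) = g := by rw [mulVec_mulVec, posDef_mul_inv hP, one_mulVec]
  rw [posDef_dot_comm hP, e, dotProduct_comm v g, dotProduct_comm (P⁻¹ *ᵥ g) g] at h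
  exact h

end QuadraticForms

/-! ### The BFGS update and its potential -/

section Update

variable {d : ℕ} {H P B : Matrix (Fin d) (Fin d) ℝ}

lemma bfgsUpdate_eq (hB : B.PosDef) (s y : Fin d → ℝ) :
    bfgsUpdate B s y =
      B - (s ⬝ᵥ (B *ᵥ s))⁻¹ • vecMulVec (B *ᵥ s) (B *ᵥ s) + (s ⬝ᵥ y)⁻¹ • vecMulVec y y := by
  rw [bfgsUpdate, posDef_transpose hB]

lemma bfgsUpdate_posDef (hB : B.PosDef) {s y : Fin d → ℝ} (hsy : 0 < s ⬝ᵥ y) :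
    (bfgsUpdate B s y).PosDef := by
  have hs : s ≠ 0 := by
    rintro rfl
    simp at hsy
  have hsBs := posDef_dot_pos hB hs
  refine Matrix.PosDef.of_dotProduct_mulVec_pos ?_ ?_
  · rw [bfgsUpdate_eq hB, Matrix.IsHermitian, conjTranspose_eq_transpose_of_trivial]
    simp [transpose_vecMulVec, posDef_transpose hB]
  · intro v hv
    have e : star v ⬝ᵥ (bfgsUpdate B s y *ᵥ v) =
        v ⬝ᵥ (B *ᵥ v) - (v ⬝ᵥ (B *ᵥ s)) ^ 2 / (s ⬝ᵥ (B *ᵥ s)) + (v ⬝ᵥ y) ^ 2 / (s ⬝ᵥ y) := by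
      rw [bfgsUpdate_eq hB]
      simp only [star_trivial, add_mulVec, sub_mulVec, smul_mulVec, vecMulVec_mulVec,
        dotProduct_add, dotProduct_sub, dotProduct_smul, smul_eq_mul, op_smul_eq_smul,
        dotProduct_comm (B *ᵥ s) v, dotProduct_comm y v]
      ring
    rw [e]
    -- Completing the square: the first two terms are the `B`-norm of the component of `v`
    -- that is `B`-orthogonal to `s`.
    set c := (v ⬝ᵥ (B *ᵥ s)) / (s ⬝ᵥ (B *ᵥ s)) with hc
    have h1 : v ⬝ᵥ (B *ᵥ v) - (v ⬝ᵥ (B *ᵥ s)) ^ 2 / (s ⬝ᵥ (B *ᵥ s)) =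
        (v - c • s) ⬝ᵥ (B *ᵥ (v - c • s)) := by
      rw [quad_sub_smul hB, hc]
      field_simp
      ring
    rw [h1]
    by_cases hvc : v - c • s = 0
    · have hv' : v = c • s := sub_eq_zero.1 hvc
      have hc0 : c ≠ 0 := by
        intro h0
        rw [h0, zero_smul] at hv'
        exact hv hv'
      have h2 : v ⬝ᵥ y = c * (s ⬝ᵥ y) := by
        conv_lhs => rw [hv']
        simp
      rw [hvc, h2]
      simp only [mulVec_zero, dotProduct_zero, zero_add]
      positivity
    · have := posDef_dot_pos hB hvc
      positivity

lemma bfgsUpdate_det (hB : B.PosDef) {s y : Fin d → ℝ} (hsy : 0 < s ⬝ᵥ y) :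
    (bfgsUpdate B s y).det = B.det * ((s ⬝ᵥ y) / (s ⬝ᵥ (B *ᵥ s))) := by
  have hs : s ≠ 0 := by
    rintro rfl
    simp at hsy
  have hsBs := posDef_dot_pos hB hs
  -- The update is the rank-two perturbation `B + U V`, so the matrix determinant lemma
  -- reduces the claim to a `2 × 2` determinant.
  let U : Matrix (Fin d) (Fin 2) ℝ :=
    Matrix.of fun i j => ![-(s ⬝ᵥ (B *ᵥ s))⁻¹ * (B *ᵥ s) i, (s ⬝ᵥ y)⁻¹ * y i] j
  let V : Matrix (Fin 2) (Fin d) ℝ := Matrix.of ![B *ᵥ s, y]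
  have e : bfgsUpdate B s y = B + U * V := by
    rw [bfgsUpdate_eq hB]
    ext i j
    simp [U, V, Matrix.mul_apply, Fin.sum_univ_two, vecMulVec_apply]
    ring
  have hdet : IsUnit B.det := (Matrix.isUnit_iff_isUnit_det _).1 hB.isUnit
  rw [e, det_add_mul _ _ hdet]
  congr 1
  have hent : ∀ (p q : Fin 2), (V * B⁻¹ * U) p q = V p ⬝ᵥ (B⁻¹ *ᵥ (fun i => U i q)) := by
    intro p q
    rw [Matrix.mul_assoc]
    rfl
  have hU0 : (fun i => U i 0) = (-(s ⬝ᵥ (B *ᵥ s))⁻¹) • (B *ᵥ s) := by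
    ext i; simp [U]
  have hU1 : (fun i => U i 1) = ((s ⬝ᵥ y)⁻¹) • y := by
    ext i; simp [U]
  have hV0 : V 0 = B *ᵥ s := rfl
  have hV1 : V 1 = y := rfl
  have hBs : B⁻¹ *ᵥ (B *ᵥ s) = s := by rw [mulVec_mulVec, posDef_inv_mul hB, one_mulVec]
  have hBy : (B *ᵥ s) ⬝ᵥ (B⁻¹ *ᵥ y) = s ⬝ᵥ y := by
    rw [posDef_dot_comm hB.inv, hBs, dotProduct_comm]
  rw [det_fin_two]
  simp only [Matrix.add_apply, hent, hU0, hU1, hV0, hV1, mulVec_smul, hBs, dotProduct_smul,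
    smul_eq_mul, hBy, dotProduct_comm (B *ᵥ s) s, dotProduct_comm y s]
  simp
  field_simp
  ring

lemma bfgsUpdate_trace (hB : B.PosDef) (s y : Fin d → ℝ) :
    (P⁻¹ * bfgsUpdate B s y).trace = (P⁻¹ * B).trace
      - ((B *ᵥ s) ⬝ᵥ (P⁻¹ *ᵥ (B *ᵥ s))) / (s ⬝ᵥ (B *ᵥ s))
      + (y ⬝ᵥ (P⁻¹ *ᵥ y)) / (s ⬝ᵥ y) := by
  rw [bfgsUpdate_eq hB, Matrix.mul_add, Matrix.mul_sub, Matrix.mul_smul, Matrix.mul_smul,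
    mul_vecMulVec, mul_vecMulVec, trace_add, trace_sub, trace_smul, trace_smul,
    trace_vecMulVec, trace_vecMulVec, smul_eq_mul, smul_eq_mul,
    dotProduct_comm (P⁻¹ *ᵥ _) (B *ᵥ s), dotProduct_comm (P⁻¹ *ᵥ y) y]
  ring

/-- One BFGS step, taken along `B s = -η g`, raises the potential `Ψ(P⁻¹ B)` by at most the
logarithm of `(gᵀs)² / (‖g‖²_{P⁻¹} · sᵀy)` as soon as `‖y‖²_{P⁻¹} ≤ sᵀy`. This is the squared cosine
of the angle between `-g` and `s`, divided by the curvature `sᵀy / ‖s‖²`, both in the geometry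
of `P`. -/
lemma Psi_bfgsUpdate_le (hP : P.PosDef) (hB : B.PosDef) {s y g : Fin d → ℝ} {η : ℝ} (hη : 0 < η)
    (hBs : B *ᵥ s = -(η • g)) (hsy : 0 < s ⬝ᵥ y)
    (hy : y ⬝ᵥ (P⁻¹ *ᵥ y) ≤ s ⬝ᵥ y) :
    Psi d (P⁻¹ * bfgsUpdate B s y) ≤ Psi d (P⁻¹ * B) +
      Real.log ((g ⬝ᵥ s) ^ 2 / ((g ⬝ᵥ (P⁻¹ *ᵥ g)) * (s ⬝ᵥ y))) := by
  have hs : s ≠ 0 := by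
    rintro rfl
    simp at hsy
  have hsBs := posDef_dot_pos hB hs
  have hBsg : s ⬝ᵥ (B *ᵥ s) = η * (-(g ⬝ᵥ s)) := by
    rw [hBs, dotProduct_neg, dotProduct_smul, smul_eq_mul, dotProduct_comm]
    ring
  have hg : g ≠ 0 := by
    rintro rfl
    simp at hBsg
    simp [hBsg] at hsBs
  have hgg := posDef_dot_pos hP.inv hg
  have hgs : 0 < -(g ⬝ᵥ s) := by
    rw [hBsg] at hsBs
    exact (mul_pos_iff_of_pos_left hη).1 hsBs
  have hX : (B *ᵥ s) ⬝ᵥ (P⁻¹ *ᵥ (B *ᵥ s)) = η ^ 2 * (g ⬝ᵥ (P⁻¹ *ᵥ g)) := by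
    rw [hBs]
    simp only [mulVec_neg, mulVec_smul, neg_dotProduct, dotProduct_neg, smul_dotProduct,
      dotProduct_smul, smul_eq_mul]
    ring
  have hPd : 0 < (P⁻¹).det := hP.inv.det_pos
  have hBd : 0 < B.det := hB.det_pos
  unfold Psi
  rw [bfgsUpdate_trace hB, det_mul, det_mul, bfgsUpdate_det hB hsy, hX, hBsg, ← mul_assoc,
    Real.log_mul (mul_pos hPd hBd).ne' (by positivity)]
  set G := g ⬝ᵥ (P⁻¹ *ᵥ g)
  set w := -(g ⬝ᵥ s) with hw
  set q := s ⬝ᵥ y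
  have hw2 : (g ⬝ᵥ s) ^ 2 = w ^ 2 := by rw [hw]; ring
  rw [hw2]
  have h1 : Real.log (η ^ 2 * G / (η * w)) ≤ η ^ 2 * G / (η * w) - 1 :=
    Real.log_le_sub_one_of_pos (by positivity)
  have h2 : Real.log (w ^ 2 / (G * q)) =
      - Real.log (η ^ 2 * G / (η * w)) - Real.log (q / (η * w)) := by
    rw [← Real.log_inv, ← Real.log_div (by positivity) (by positivity)]
    congr 1
    field_simp
  have h3 : (y ⬝ᵥ (P⁻¹ *ᵥ y)) / q ≤ 1 := (div_le_one hsy).2 hy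
  rw [h2]
  linarith

open scoped MatrixOrder ComplexOrder in
/-- `Ψ(P⁻¹ B) = ∑ (λᵢ - 1 - log λᵢ)` over the eigenvalues of a positive definite matrix congruent
to `B` and similar to `P⁻¹ B`. -/
lemma Psi_nonneg (hP : P.PosDef) (hB : B.PosDef) : 0 ≤ Psi d (P⁻¹ * B) := by
  obtain ⟨S, hS⟩ := CStarAlgebra.nonneg_iff_eq_star_mul_self.mp hP.inv.posSemidef.nonneg
  rw [star_eq_conjTranspose] at hS
  have hSu : IsUnit S.det := by
    have h := hP.inv.det_pos
    rw [hS, det_mul] at h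
    exact isUnit_iff_ne_zero.2 (right_ne_zero_of_mul h.ne')
  have hA : (S * B * Sᴴ).PosDef := by
    refine hB.mul_mul_conjTranspose_same ?_
    exact vecMul_injective_iff_isUnit.2 ((Matrix.isUnit_iff_isUnit_det _).2 hSu)
  have htr : (P⁻¹ * B).trace = (S * B * Sᴴ).trace := by
    rw [hS, Matrix.mul_assoc, trace_mul_comm]
  have hdet : (P⁻¹ * B).det = (S * B * Sᴴ).det := by
    rw [hS]; simp only [det_mul]; ring
  unfold Psi
  rw [htr, hdet, hA.isHermitian.trace_eq_sum_eigenvalues, hA.isHermitian.det_eq_prod_eigenvalues]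
  have hpos := hA.eigenvalues_pos
  simp only [RCLike.ofReal_real_eq_id, id]
  rw [Real.log_prod (fun i _ => (hpos i).ne')]
  have : (d : ℝ) = ∑ _i : Fin d, (1 : ℝ) := by simp
  rw [this, ← Finset.sum_sub_distrib, ← Finset.sum_sub_distrib]
  refine Finset.sum_nonneg fun i _ => ?_
  have := Real.log_le_sub_one_of_pos (hpos i)
  linarith

end Update

/-! ### Strong self-concordance along line segments -/

section Analysis

lemma omegaFn_le_imp {u v : ℝ} (hv : 0 ≤ v) (h : omegaFn u ≤ omegaFn v) : u ≤ v := by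
  by_contra! huv
  unfold omegaFn at h
  have h1 : 0 < 1 + v := by linarith
  have h2 : 0 < 1 + u := by linarith
  have h3 : Real.log ((1 + u) / (1 + v)) < (1 + u) / (1 + v) - 1 := by
    refine Real.log_lt_sub_one_of_pos (by positivity) ?_
    rw [Ne, div_eq_one_iff_eq h1.ne']
    intro h; linarith
  rw [Real.log_div h2.ne' h1.ne'] at h3
  have h4 : (1 + u) / (1 + v) - 1 ≤ u - v := by
    rw [show (1 + u) / (1 + v) - 1 = (u - v) / (1 + v) by field_simp; ring]
    exact div_le_self (by linarith) (by linarith)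
  linarith

lemma le_of_hasDerivAt_nonneg {h h' : ℝ → ℝ} {T : ℝ} (hT : 0 ≤ T)
    (hd : ∀ τ ∈ Set.Icc 0 T, HasDerivAt h (h' τ) τ)
    (hn : ∀ τ ∈ Set.Icc 0 T, 0 ≤ h' τ) : h 0 ≤ h T := by
  have hm : MonotoneOn h (Set.Icc 0 T) := by
    refine monotoneOn_of_hasDerivWithinAt_nonneg (f' := h') (convex_Icc 0 T)
      (fun τ hτ => (hd τ hτ).continuousAt.continuousWithinAt) ?_ ?_
    · intro τ hτ
      exact (hd τ (interior_subset hτ)).hasDerivWithinAt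
    · intro τ hτ
      exact hn τ (interior_subset hτ)
  exact hm (Set.left_mem_Icc.2 hT) (Set.right_mem_Icc.2 hT) hT

variable {d : ℕ} {f : (Fin d → ℝ) → ℝ} {grad : (Fin d → ℝ) → (Fin d → ℝ)}
  {hess : (Fin d → ℝ) → Matrix (Fin d) (Fin d) ℝ}

/-- At a point where `grad` failed to be differentiable its derivative would be the junk value
`0`, contradicting positive definiteness of `hess`. -/
lemma grad_differentiableAt (hhess : ∀ x v, fderiv ℝ grad x v = hess x *ᵥ v)
    (hpd : ∀ x, (hess x).PosDef) (p : Fin d → ℝ) : DifferentiableAt ℝ grad p := by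
  by_contra h
  by_cases hv : ∃ v : Fin d → ℝ, v ≠ 0
  · obtain ⟨v, hv⟩ := hv
    have h1 := hhess p v
    rw [fderiv_zero_of_not_differentiableAt h] at h1
    have h2 := posDef_dot_pos (hpd p) hv
    rw [← h1] at h2
    simp at h2
  · push Not at hv
    have : Subsingleton (Fin d → ℝ) := ⟨fun a b => by rw [hv a, hv b]⟩
    exact h (hasFDerivAt_of_subsingleton grad p).differentiableAt

lemma hasDerivAt_line (p v : Fin d → ℝ) (τ : ℝ) :
    HasDerivAt (fun τ : ℝ => p + τ • v) v τ := by
  simpa using ((hasDerivAt_id τ).smul_const v).const_add p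

lemma hasDerivAt_f_line (hf : ContDiff ℝ 2 f) (hgrad : ∀ x v, fderiv ℝ f x v = grad x ⬝ᵥ v)
    (p v : Fin d → ℝ) (τ : ℝ) :
    HasDerivAt (fun τ : ℝ => f (p + τ • v)) (grad (p + τ • v) ⬝ᵥ v) τ := by
  have h := ((hf.differentiable (by norm_num)) (p + τ • v)).hasFDerivAt
  have := h.comp_hasDerivAt τ (hasDerivAt_line p v τ)
  rwa [hgrad] at this

lemma hasDerivAt_grad_line (hhess : ∀ x v, fderiv ℝ grad x v = hess x *ᵥ v)
    (hpd : ∀ x, (hess x).PosDef) (p v w : Fin d → ℝ) (τ : ℝ) :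
    HasDerivAt (fun τ : ℝ => grad (p + τ • v) ⬝ᵥ w) (w ⬝ᵥ (hess (p + τ • v) *ᵥ v)) τ := by
  have h := (grad_differentiableAt hhess hpd (p + τ • v)).hasFDerivAt
  have h2 := h.comp_hasDerivAt τ (hasDerivAt_line p v τ)
  rw [hhess] at h2
  have h3 := fun i => (hasDerivAt_pi.1 h2) i
  simp only [dotProduct]
  have h4 := HasDerivAt.fun_sum (u := Finset.univ)
    (fun i (_ : i ∈ Finset.univ) => (h3 i).mul_const (w i))
  simp only [mul_comm (w _)]
  exact h4

lemma convex_gradient_ineq (hf : ContDiff ℝ 2 f) (hgrad : ∀ x v, fderiv ℝ f x v = grad x ⬝ᵥ v)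
    (hhess : ∀ x v, fderiv ℝ grad x v = hess x *ᵥ v) (hpd : ∀ x, (hess x).PosDef)
    (p v : Fin d → ℝ) : f (p + v) - f p ≤ grad (p + v) ⬝ᵥ v := by
  have h := le_of_hasDerivAt_nonneg (T := 1) zero_le_one
    (h := fun τ : ℝ => τ * (grad (p + τ • v) ⬝ᵥ v) - f (p + τ • v))
    (h' := fun τ => τ * (v ⬝ᵥ (hess (p + τ • v) *ᵥ v)))
    (fun τ _ => by
      have := ((hasDerivAt_id τ).mul (hasDerivAt_grad_line hhess hpd p v v τ)).sub
        (hasDerivAt_f_line hf hgrad p v τ)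
      refine this.congr_deriv ?_
      simp)
    (fun τ hτ => mul_nonneg hτ.1 (posDef_dot_nonneg (hpd _) v))
  simp only [zero_smul, one_smul, add_zero] at h
  linarith

lemma ssc_quad {M : ℝ} (hssc : StronglySelfConcordant hess M) (x y z u : Fin d → ℝ) :
    u ⬝ᵥ (hess x *ᵥ u) ≤
      (1 + M * Real.sqrt ((x - y) ⬝ᵥ (hess z *ᵥ (x - y)))) * (u ⬝ᵥ (hess y *ᵥ u)) := by
  have h := (hssc x y z).dotProduct_mulVec_nonneg u
  simp only [star_trivial, sub_mulVec, smul_mulVec, dotProduct_sub, dotProduct_smul,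
    smul_eq_mul] at h
  linarith

/-- The Hessian along the segment from `p` to `p + v` decays at most like
`1 / (1 + M τ ‖v‖_p)`. -/
lemma ssc_line_lower {M : ℝ} (hM : 0 < M)
    (hssc : StronglySelfConcordant hess M) (p v : Fin d → ℝ) {τ : ℝ} (hτ : 0 ≤ τ) :
    (v ⬝ᵥ (hess p *ᵥ v)) / (1 + M * Real.sqrt (v ⬝ᵥ (hess p *ᵥ v)) * τ) ≤
      v ⬝ᵥ (hess (p + τ • v) *ᵥ v) := by
  have h := ssc_quad hssc p (p + τ • v) p v
  have e : p - (p + τ • v) = (-τ) • v := by simp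
  rw [e] at h
  simp only [mulVec_smul, smul_dotProduct, dotProduct_smul, smul_eq_mul] at h
  rw [show -τ * (-τ * (v ⬝ᵥ (hess p *ᵥ v))) = τ ^ 2 * (v ⬝ᵥ (hess p *ᵥ v)) by ring,
    Real.sqrt_mul (sq_nonneg τ), Real.sqrt_sq hτ] at h
  rw [div_le_iff₀ (by positivity)]
  linarith

lemma ssc_gradient_lower {M : ℝ} (hM : 0 < M)
    (hhess : ∀ x v, fderiv ℝ grad x v = hess x *ᵥ v) (hpd : ∀ x, (hess x).PosDef)
    (hssc : StronglySelfConcordant hess M) (p v : Fin d → ℝ) (hp : grad p = 0) :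
    (v ⬝ᵥ (hess p *ᵥ v)) / (1 + M * Real.sqrt (v ⬝ᵥ (hess p *ᵥ v))) ≤ grad (p + v) ⬝ᵥ v := by
  set q := v ⬝ᵥ (hess p *ᵥ v) with hq
  have hq0 : 0 ≤ q := posDef_dot_nonneg (hpd p) v
  have h := le_of_hasDerivAt_nonneg (T := 1) zero_le_one
    (h := fun τ : ℝ => grad (p + τ • v) ⬝ᵥ v - τ * (q / (1 + M * Real.sqrt q)))
    (h' := fun τ => v ⬝ᵥ (hess (p + τ • v) *ᵥ v) - q / (1 + M * Real.sqrt q))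
    (fun τ _ => by
      have := (hasDerivAt_grad_line hhess hpd p v v τ).sub
        ((hasDerivAt_id τ).mul_const (q / (1 + M * Real.sqrt q)))
      refine this.congr_deriv ?_
      simp)
    (fun τ hτ => by
      have h1 := ssc_line_lower hM hssc p v hτ.1
      have h2 : q / (1 + M * Real.sqrt q) ≤ q / (1 + M * Real.sqrt q * τ) := by
        have : M * Real.sqrt q * τ ≤ M * Real.sqrt q :=
          mul_le_of_le_one_right (by positivity) hτ.2
        have h0 : 0 ≤ M * Real.sqrt q * τ := mul_nonneg (by positivity) hτ.1
        gcongr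
      linarith)
  simp only [zero_smul, one_smul, add_zero, hp, zero_dotProduct] at h
  linarith

/-- The suboptimality gap controls the distance to the minimizer in the local norm. It is a
comparison of second derivatives along the segment, `1 / (1 + u/2)² ≤ 1 / (1 + u)`, the left side
being the second derivative of `4 ω(u/2)`. -/
lemma ssc_omega_le {M : ℝ} (hM : 0 < M) (hf : ContDiff ℝ 2 f)
    (hgrad : ∀ x v, fderiv ℝ f x v = grad x ⬝ᵥ v)
    (hhess : ∀ x v, fderiv ℝ grad x v = hess x *ᵥ v) (hpd : ∀ x, (hess x).PosDef)
    (hssc : StronglySelfConcordant hess M) (p v : Fin d → ℝ) (hp : grad p = 0) :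
    4 * omegaFn (M * Real.sqrt (v ⬝ᵥ (hess p *ᵥ v)) / 2) ≤ M ^ 2 * (f (p + v) - f p) := by
  set q := v ⬝ᵥ (hess p *ᵥ v) with hq
  have hq0 : 0 ≤ q := posDef_dot_nonneg (hpd p) v
  set c := M * Real.sqrt q with hc
  have hc0 : 0 ≤ c := by positivity
  have hc2 : M ^ 2 * q = c ^ 2 := by rw [hc, mul_pow, Real.sq_sqrt hq0]
  have hpos : ∀ τ : ℝ, 0 ≤ τ → 0 < 1 + c / 2 * τ := fun τ hτ => by positivity
  have hlin : ∀ τ : ℝ, HasDerivAt (fun τ : ℝ => 1 + c / 2 * τ) (c / 2) τ := fun τ => by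
    simpa using ((hasDerivAt_id τ).const_mul (c / 2)).const_add 1
  have h1 : ∀ T : ℝ, 0 ≤ T →
      2 * c * (1 - (1 + c / 2 * T)⁻¹) ≤ M ^ 2 * (grad (p + T • v) ⬝ᵥ v) := by
    intro T hT
    have h := le_of_hasDerivAt_nonneg (T := T) hT
      (h := fun τ : ℝ => M ^ 2 * (grad (p + τ • v) ⬝ᵥ v) - 2 * c * (1 - (1 + c / 2 * τ)⁻¹))
      (h' := fun τ => M ^ 2 * (v ⬝ᵥ (hess (p + τ • v) *ᵥ v))
        - c ^ 2 / (1 + c / 2 * τ) ^ 2)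
      (fun τ hτ => by
        have := ((hasDerivAt_grad_line hhess hpd p v v τ).const_mul (M ^ 2)).sub
          ((((hlin τ).inv (hpos τ hτ.1).ne').const_sub 1).const_mul (2 * c))
        refine this.congr_deriv ?_
        ring)
      (fun τ hτ => by
        have h2 := ssc_line_lower hM hssc p v hτ.1
        rw [← hq, ← hc] at h2
        have h3 : c ^ 2 / (1 + c / 2 * τ) ^ 2 ≤ c ^ 2 / (1 + c * τ) := by
          have : 0 ≤ c * τ := mul_nonneg hc0 hτ.1
          gcongr
          nlinarith [sq_nonneg (c * τ)]
        have h4 : M ^ 2 * (q / (1 + c * τ)) ≤ M ^ 2 * (v ⬝ᵥ (hess (p + τ • v) *ᵥ v)) := by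
          gcongr
        rw [← mul_div_assoc, hc2] at h4
        linarith)
    simp only [zero_smul, add_zero, hp, zero_dotProduct, mul_zero, inv_one, sub_self] at h
    linarith
  have h := le_of_hasDerivAt_nonneg (T := 1) zero_le_one
    (h := fun τ : ℝ => M ^ 2 * f (p + τ • v) - 4 * (c / 2 * τ - Real.log (1 + c / 2 * τ)))
    (h' := fun τ => M ^ 2 * (grad (p + τ • v) ⬝ᵥ v) - 2 * c * (1 - (1 + c / 2 * τ)⁻¹))
    (fun τ hτ => by
      have := ((hasDerivAt_f_line hf hgrad p v τ).const_mul (M ^ 2)).sub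
        ((((hasDerivAt_id τ).const_mul (c / 2)).sub
          ((hlin τ).log (hpos τ hτ.1).ne')).const_mul 4)
      refine this.congr_deriv ?_
      ring)
    (fun τ hτ => sub_nonneg.2 (h1 τ hτ.1))
  simp only [zero_smul, one_smul, add_zero, mul_zero, mul_one, Real.log_one, sub_zero] at h
  unfold omegaFn
  linarith

/-- Cocoercivity of the gradient along a segment on which the Hessian is dominated by `P`. -/
lemma gradient_diff_cocoercive (hhess : ∀ x v, fderiv ℝ grad x v = hess x *ᵥ v)
    (hpd : ∀ x, (hess x).PosDef) {P : Matrix (Fin d) (Fin d) ℝ} (hP : P.PosDef)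
    (p s : Fin d → ℝ)
    (hle : ∀ τ ∈ Set.Icc (0 : ℝ) 1, ∀ u, u ⬝ᵥ (hess (p + τ • s) *ᵥ u) ≤ u ⬝ᵥ (P *ᵥ u)) :
    (grad (p + s) - grad p) ⬝ᵥ (P⁻¹ *ᵥ (grad (p + s) - grad p)) ≤
      s ⬝ᵥ (grad (p + s) - grad p) := by
  set y := grad (p + s) - grad p with hy
  set w := P⁻¹ *ᵥ y with hw
  have hPw : P *ᵥ w = y := by rw [hw, mulVec_mulVec, posDef_mul_inv hP, one_mulVec]
  -- Integrating `2 wᵀ∇²f s ≤ sᵀ∇²f s + wᵀ∇²f w ≤ sᵀ∇²f s + wᵀP w` along the segment.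
  have h := le_of_hasDerivAt_nonneg (T := 1) zero_le_one
    (h := fun τ : ℝ => grad (p + τ • s) ⬝ᵥ s + τ * (w ⬝ᵥ (P *ᵥ w))
      - 2 * (grad (p + τ • s) ⬝ᵥ w))
    (h' := fun τ => s ⬝ᵥ (hess (p + τ • s) *ᵥ s) + w ⬝ᵥ (P *ᵥ w)
      - 2 * (w ⬝ᵥ (hess (p + τ • s) *ᵥ s)))
    (fun τ _ => by
      have := ((hasDerivAt_grad_line hhess hpd p s s τ).add
        ((hasDerivAt_id τ).mul_const (w ⬝ᵥ (P *ᵥ w)))).sub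
        ((hasDerivAt_grad_line hhess hpd p s w τ).const_mul 2)
      refine this.congr_deriv ?_
      simp)
    (fun τ hτ => by
      have h1 := hle τ hτ w
      have h2 := posDef_dot_nonneg (hpd (p + τ • s)) (w - (1 : ℝ) • s)
      rw [quad_sub_smul (hpd _)] at h2
      linarith)
  simp only [zero_smul, one_smul, add_zero, zero_mul, one_mul, hPw] at h
  have e1 : s ⬝ᵥ y = grad (p + s) ⬝ᵥ s - grad p ⬝ᵥ s := by
    rw [dotProduct_comm, hy, sub_dotProduct]
  have e2 : y ⬝ᵥ w = grad (p + s) ⬝ᵥ w - grad p ⬝ᵥ w := by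
    rw [hy, sub_dotProduct]
  rw [dotProduct_comm w y] at h
  linarith

end Analysis

/-! ### From the potential to a linear rate -/

section Rate

/-- If step `i` decreases `C` by a relative amount of at least `ρ i = κ λ i` and `∑ log (λ i) ≥ -Δ`, then the
average of `ρ i` is at least `κ exp (-Δ / T)`, by the tangent line of `exp` at `-Δ / T`; a second
tangent line turns the bound on the average into one on the product of the `1 - ρ i`. -/
lemma linear_rate_of_sum_log {C lam : ℕ → ℝ} {κ Δ : ℝ} {T : ℕ} (hT : 1 ≤ T) (hC : ∀ t, 0 ≤ C t)
    (hκ : 0 ≤ κ) (hlam : ∀ t < T, 0 < lam t)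
    (hstep : ∀ t < T, C (t + 1) ≤ C t * (1 - κ * lam t))
    (hsum : -Δ ≤ ∑ t ∈ Finset.range T, Real.log (lam t))
    (hc : 0 < 1 - κ * Real.exp (-Δ / T)) :
    C T ≤ C 0 * (1 - κ * Real.exp (-Δ / T)) ^ T := by
  have hT0 : (0 : ℝ) < T := by exact_mod_cast hT
  set m := -Δ / T with hm
  set c := 1 - κ * Real.exp m with hcdef
  have hmT : m * T = -Δ := by rw [hm]; field_simp
  have havg : T * Real.exp m ≤ ∑ t ∈ Finset.range T, lam t := by
    have h1 : ∀ t ∈ Finset.range T,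
        Real.exp m * (1 + (Real.log (lam t) - m)) ≤ lam t := by
      intro t ht
      have hl := hlam t (Finset.mem_range.1 ht)
      have h2 := Real.add_one_le_exp (Real.log (lam t) - m)
      calc Real.exp m * (1 + (Real.log (lam t) - m))
          ≤ Real.exp m * Real.exp (Real.log (lam t) - m) := by
            gcongr; linarith
        _ = lam t := by
            rw [← Real.exp_add, add_sub_cancel, Real.exp_log hl]
    have h3 := Finset.sum_le_sum h1
    rw [← Finset.mul_sum, Finset.sum_add_distrib, Finset.sum_sub_distrib] at h3
    simp only [Finset.sum_const, Finset.card_range, nsmul_eq_mul, mul_one] at h3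
    refine le_trans ?_ h3
    rw [mul_comm]
    gcongr
    linarith
  have hprod : ∀ n ≤ T, C n ≤
      C 0 * c ^ n * Real.exp (∑ t ∈ Finset.range n, ((1 - κ * lam t) / c - 1)) := by
    intro n
    induction n with
    | zero => intro _; simp
    | succ n ih =>
      intro hn
      have h1 := ih (by omega)
      have h2 : 1 - κ * lam n ≤ c * Real.exp ((1 - κ * lam n) / c - 1) := by
        have h3 := Real.add_one_le_exp ((1 - κ * lam n) / c - 1)
        rw [sub_add_cancel, div_le_iff₀ hc] at h3
        linarith
      calc C (n + 1) ≤ C n * (1 - κ * lam n) := hstep n (by omega)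
        _ ≤ C n * (c * Real.exp ((1 - κ * lam n) / c - 1)) := by
            gcongr
            exact hC n
        _ ≤ (C 0 * c ^ n * Real.exp (∑ t ∈ Finset.range n, ((1 - κ * lam t) / c - 1))) *
            (c * Real.exp ((1 - κ * lam n) / c - 1)) := by
            gcongr
        _ = _ := by
            rw [Finset.sum_range_succ, Real.exp_add]
            ring
  refine (hprod T le_rfl).trans ?_
  have hle : ∑ t ∈ Finset.range T, ((1 - κ * lam t) / c - 1) ≤ 0 := by
    rw [Finset.sum_sub_distrib, ← Finset.sum_div, Finset.sum_sub_distrib, ← Finset.mul_sum]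
    simp only [Finset.sum_const, Finset.card_range, nsmul_eq_mul, mul_one]
    rw [sub_nonpos, div_le_iff₀ hc, hcdef]
    nlinarith [mul_le_mul_of_nonneg_left havg hκ]
  have h0 : 0 ≤ C 0 * c ^ T := mul_nonneg (hC 0) (by positivity)
  calc _ ≤ C 0 * c ^ T * 1 := by
        gcongr
        exact Real.exp_le_one_iff.2 hle
    _ = _ := mul_one _

end Rate

/-! ### A single step of the method -/

section Step

variable {d : ℕ} {f : (Fin d → ℝ) → ℝ} {grad : (Fin d → ℝ) → (Fin d → ℝ)}
  {hess : (Fin d → ℝ) → Matrix (Fin d) (Fin d) ℝ}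

/-- The curvature half of the Wolfe conditions makes `sᵀy` positive, so that the update is well
defined. -/
lemma bfgs_step_curvature {B : Matrix (Fin d) (Fin d) ℝ} (hB : B.PosDef) {g g' s : Fin d → ℝ}
    {η β : ℝ} (hη : 0 < η) (hg : g ≠ 0) (hs : s = η • (-(B⁻¹ *ᵥ g)))
    (hW : g' ⬝ᵥ (-(B⁻¹ *ᵥ g)) ≥ β * (g ⬝ᵥ (-(B⁻¹ *ᵥ g)))) :
    B *ᵥ s = -(η • g) ∧ g ⬝ᵥ s < 0 ∧ (1 - β) * (-(g ⬝ᵥ s)) ≤ s ⬝ᵥ (g' - g) := by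
  have hgg := posDef_dot_pos hB.inv hg
  refine ⟨?_, ?_, ?_⟩
  · rw [hs, mulVec_smul, mulVec_neg, mulVec_mulVec, posDef_mul_inv hB, one_mulVec, smul_neg]
  · rw [hs, dotProduct_smul, dotProduct_neg, smul_eq_mul]
    have := mul_pos hη hgg
    linarith
  · have h := mul_le_mul_of_nonneg_left hW hη.le
    rw [dotProduct_comm s, sub_dotProduct, hs, dotProduct_smul, dotProduct_smul, smul_eq_mul,
      smul_eq_mul]
    linarith

lemma quad_segment_le {H : Matrix (Fin d) (Fin d) ℝ} (hH : H.PosDef) (u s : Fin d → ℝ) {K τ : ℝ}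
    (hτ : τ ∈ Set.Icc (0 : ℝ) 1) (h0 : u ⬝ᵥ (H *ᵥ u) ≤ K)
    (h1 : (u + s) ⬝ᵥ (H *ᵥ (u + s)) ≤ K) :
    (u + τ • s) ⬝ᵥ (H *ᵥ (u + τ • s)) ≤ K := by
  have e1 := quad_sub_smul hH u s (-1)
  have e2 := quad_sub_smul hH u s (-τ)
  simp only [neg_smul, one_smul, sub_neg_eq_add] at e1 e2
  rw [e1] at h1
  rw [e2]
  have hs := posDef_dot_nonneg hH s
  have h2 := mul_le_mul_of_nonneg_left h1 hτ.1
  have h3 := mul_le_mul_of_nonneg_left h0 (sub_nonneg.2 hτ.2)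
  have h4 : 0 ≤ τ * (1 - τ) * (s ⬝ᵥ (H *ᵥ s)) :=
    mul_nonneg (mul_nonneg hτ.1 (sub_nonneg.2 hτ.2)) hs
  linarith

lemma grad_eq_zero_of_min (hgrad : ∀ x v, fderiv ℝ f x v = grad x ⬝ᵥ v) {p : Fin d → ℝ}
    (hmin : ∀ y, f p ≤ f y) : grad p = 0 := by
  have h : fderiv ℝ f p = 0 :=
    IsLocalMin.fderiv_eq_zero (Filter.Eventually.of_forall hmin)
  have h2 := hgrad p (grad p)
  rw [h] at h2
  exact dotProduct_self_eq_zero.1 h2.symm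

lemma smul_hess_quad_le {M D : ℝ} (hM : 0 < M) (hD : 0 ≤ D) (hpd : ∀ x, (hess x).PosDef)
    (hssc : StronglySelfConcordant hess M) {p z : Fin d → ℝ}
    (hz : (z - p) ⬝ᵥ (hess p *ᵥ (z - p)) ≤ (D / M) ^ 2) (u : Fin d → ℝ) :
    u ⬝ᵥ (hess z *ᵥ u) ≤ u ⬝ᵥ (((1 + D) • hess p) *ᵥ u) := by
  refine (ssc_quad hssc z p p u).trans ?_
  rw [smul_mulVec, dotProduct_smul, smul_eq_mul]
  have h1 : Real.sqrt ((z - p) ⬝ᵥ (hess p *ᵥ (z - p))) ≤ D / M := by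
    rw [← Real.sqrt_sq (by positivity : 0 ≤ D / M)]
    exact Real.sqrt_le_sqrt hz
  rw [le_div_iff₀ hM, mul_comm] at h1
  have := posDef_dot_nonneg (hpd p) u
  gcongr

/-- Gradient domination: the dual norm of the gradient controls the suboptimality gap. -/
lemma gap_le_dual_norm {M D : ℝ} (hM : 0 < M) (hD : 0 ≤ D) (hf : ContDiff ℝ 2 f)
    (hgrad : ∀ x v, fderiv ℝ f x v = grad x ⬝ᵥ v)
    (hhess : ∀ x v, fderiv ℝ grad x v = hess x *ᵥ v) (hpd : ∀ x, (hess x).PosDef)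
    (hssc : StronglySelfConcordant hess M) {p z : Fin d → ℝ} (hp : grad p = 0)
    (hz : M * Real.sqrt ((z - p) ⬝ᵥ (hess p *ᵥ (z - p))) ≤ D) (hgap : 0 < f z - f p) :
    f z - f p ≤ (1 + D) ^ 2 * (grad z ⬝ᵥ (((1 + D) • hess p)⁻¹ *ᵥ grad z)) := by
  have hk : 0 < 1 + D := by linarith
  have hP : ((1 + D) • hess p).PosDef := (hpd p).smul hk
  have h1 := convex_gradient_ineq hf hgrad hhess hpd p (z - p)
  have h2 := ssc_gradient_lower hM hhess hpd hssc p (z - p) hp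
  have h3 := posDef_dual_cauchy_schwarz hP (grad z) (z - p)
  rw [smul_mulVec, dotProduct_smul, smul_eq_mul] at h3
  rw [add_sub_cancel] at h1 h2
  set q := (z - p) ⬝ᵥ (hess p *ᵥ (z - p)) with hq
  have hq0 : 0 ≤ q := posDef_dot_nonneg (hpd p) _
  set w := grad z ⬝ᵥ (z - p)
  set G := grad z ⬝ᵥ (((1 + D) • hess p)⁻¹ *ᵥ grad z)
  have hG : 0 ≤ G := posDef_dot_nonneg hP.inv _
  have hw : 0 < w := hgap.trans_le h1
  rw [div_le_iff₀ (by positivity)] at h2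
  have h4 : q ≤ w * (1 + D) := h2.trans (by gcongr)
  have h5 : w * w ≤ ((1 + D) ^ 2 * G) * w := by
    calc w * w = w ^ 2 := by ring
      _ ≤ G * ((1 + D) * q) := h3
      _ ≤ G * ((1 + D) * (w * (1 + D))) := by gcongr
      _ = _ := by ring
  exact h1.trans (le_of_mul_le_mul_right h5 hw)

lemma step_decrease_arith {Ct Cs α β k w q G : ℝ} (hα : 0 < α) (hβ : β < 1) (hk : 0 < k)
    (hw : 0 < w) (hq : 0 < q) (hG : 0 < G) (hdec : Cs ≤ Ct - α * w)
    (hcurv : (1 - β) * w ≤ q) (hdom : Ct ≤ k ^ 2 * G) :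
    Cs ≤ Ct * (1 - α * (1 - β) / k ^ 2 * (w ^ 2 / (G * q))) := by
  have hb : 0 < 1 - β := by linarith
  have h1 : Ct * (α * (1 - β) / k ^ 2 * (w ^ 2 / (G * q))) ≤ α * w := by
    calc Ct * (α * (1 - β) / k ^ 2 * (w ^ 2 / (G * q)))
        ≤ (k ^ 2 * G) * (α * (1 - β) / k ^ 2 * (w ^ 2 / (G * q))) := by gcongr
      _ = α * w * ((1 - β) * w / q) := by field_simp
      _ ≤ α * w * 1 := by
          gcongr
          exact (div_le_one hq).2 hcurv
      _ = α * w := mul_one _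
  linarith

end Step

/-- Global linear convergence of BFGS with `B₀ = aI` (Corollary 1). -/
theorem bfgs_global_linear_rate_identity_init {d : ℕ}
    (f : (Fin d → ℝ) → ℝ)
    (grad : (Fin d → ℝ) → (Fin d → ℝ))
    (hess : (Fin d → ℝ) → Matrix (Fin d) (Fin d) ℝ)
    (hf : ContDiff ℝ 2 f)
    (hgrad : ∀ x v, fderiv ℝ f x v = grad x ⬝ᵥ v)
    (hhess : ∀ x v, fderiv ℝ grad x v = hess x *ᵥ v)
    (hpd : ∀ x, (hess x).PosDef)
    (M : ℝ) (hM : 0 < M)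
    (hssc : StronglySelfConcordant hess M)
    (xstar : Fin d → ℝ) (hmin : ∀ y, f xstar ≤ f y)
    (α β : ℝ) (hα0 : 0 < α) (hα : α < 1/2) (hαβ : α < β) (hβ : β < 1)
    (x : ℕ → Fin d → ℝ) (B : ℕ → Matrix (Fin d) (Fin d) ℝ) (η : ℕ → ℝ)
    (hB0symm : (B 0).IsSymm) (hB0pd : (B 0).PosDef)
    (hx0 : f xstar < f (x 0))
    (hη : ∀ t, 0 < η t)
    (hxupd : ∀ t, x (t+1) = x t + η t • (-((B t)⁻¹ *ᵥ grad (x t))))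
    (hBupd : ∀ t, B (t+1) = bfgsUpdate (B t) (x (t+1) - x t) (grad (x (t+1)) - grad (x t)))
    (hAW1 : ∀ t, f (x (t+1)) ≤
      f (x t) + α * η t * (grad (x t) ⬝ᵥ (-((B t)⁻¹ *ᵥ grad (x t)))))
    (hAW2 : ∀ t, grad (x (t+1)) ⬝ᵥ (-((B t)⁻¹ *ᵥ grad (x t))) ≥
      β * (grad (x t) ⬝ᵥ (-((B t)⁻¹ *ᵥ grad (x t)))))
    (C : ℕ → ℝ) (hC : ∀ t, C t = f (x t) - f xstar)
    (D : ℕ → ℝ) (hD : ∀ t, 0 ≤ D t ∧ omegaFn (D t / 2) = M ^ 2 * C t / 4)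
    (a : ℝ) (ha : 0 < a)
    (hB0eq : B 0 = a • (1 : Matrix (Fin d) (Fin d) ℝ))
    (Δ₁ Δ₂ : ℝ)
    (hΔ₁ : Δ₁ = Psi d ((1 + D 0)⁻¹ • (a • (hess xstar)⁻¹)))
    (hΔ₂ : Δ₂ = Psi d (a • (hess xstar)⁻¹))
 :
    (∀ t : ℕ, 1 ≤ t →
      (f (x t) - f xstar) / (f (x 0) - f xstar) ≤
        (1 - α * (1 - β) * Real.exp (-Δ₁ / (t : ℝ)) / (1 + D 0) ^ 2) ^ t) ∧
    (∀ t : ℕ, Δ₁ ≤ (t : ℝ) →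
      (f (x t) - f xstar) / (f (x 0) - f xstar) ≤
        (1 - α * (1 - β) / (3 * (1 + D 0) ^ 2)) ^ t) := by
  -- The weight matrix: it dominates every Hessian on the initial sublevel set.
  set k := 1 + D 0 with hkdef
  set P := k • hess xstar with hPdef
  have hD0 := (hD 0).1
  have hk1 : 1 ≤ k := by linarith
  have hk : 0 < k := by linarith
  have hP : P.PosDef := (hpd xstar).smul hk
  have hstar : grad xstar = 0 := grad_eq_zero_of_min hgrad hmin
  have hCnn : ∀ t, 0 ≤ C t := fun t => by rw [hC]; linarith [hmin (x t)]
  have hdir : ∀ t, x (t + 1) - x t = η t • (-((B t)⁻¹ *ᵥ grad (x t))) := fun t => by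
    rw [hxupd t]; simp
  have hfdec : ∀ t, f (x (t + 1)) ≤ f (x t) + α * (grad (x t) ⬝ᵥ (x (t + 1) - x t)) := fun t => by
    rw [hdir t, dotProduct_smul, smul_eq_mul, ← mul_assoc]
    exact hAW1 t
  have hcurv : ∀ t, (B t).PosDef → grad (x t) ≠ 0 → _ := fun t hBt hg =>
    bfgs_step_curvature hBt (hη t) hg (hdir t) (hAW2 t)
  have hsy : ∀ t, (B t).PosDef → grad (x t) ≠ 0 →
      0 < (x (t + 1) - x t) ⬝ᵥ (grad (x (t + 1)) - grad (x t)) := by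
    intro t hBt hg
    obtain ⟨-, h1, h2⟩ := hcurv t hBt hg
    refine lt_of_lt_of_le ?_ h2
    have h3 : 0 < 1 - β := by linarith
    have h4 : 0 < -(grad (x t) ⬝ᵥ (x (t + 1) - x t)) := by linarith
    positivity
  have hBpd : ∀ t, (B t).PosDef := by
    intro t
    induction t with
    | zero => exact hB0pd
    | succ t ih =>
      by_cases hg : grad (x t) = 0
      · -- At a stationary point the step vanishes, and so do both correction terms, since
        -- `0⁻¹ = 0`.
        have hx : x (t + 1) = x t := by rw [hxupd t, hg]; simp
        rw [hBupd t, hx]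
        simpa [bfgsUpdate] using ih
      · rw [hBupd t]
        exact bfgsUpdate_posDef ih (hsy t ih hg)
  have hanti : Antitone C := by
    refine antitone_nat_of_succ_le fun t => ?_
    rw [hC, hC]
    have h := hfdec t
    by_cases hg : grad (x t) = 0
    · rw [hg] at h
      simp at h
      linarith
    · obtain ⟨-, h1, -⟩ := hcurv t (hBpd t) hg
      have := mul_neg_of_pos_of_neg hα0 h1
      linarith
  -- `4 ω(M ‖x_t - x_*‖ / 2) ≤ M² C_t ≤ M² C_0 = 4 ω(D_0 / 2)`.
  have hball : ∀ t, M * Real.sqrt ((x t - xstar) ⬝ᵥ (hess xstar *ᵥ (x t - xstar))) ≤ D 0 := by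
    intro t
    have h1 := ssc_omega_le hM hf hgrad hhess hpd hssc xstar (x t - xstar) hstar
    rw [add_sub_cancel, ← hC] at h1
    have h2 : M ^ 2 * C t ≤ M ^ 2 * C 0 := by
      have := hanti (Nat.zero_le t)
      gcongr
    have h3 := omegaFn_le_imp (u := M * Real.sqrt ((x t - xstar) ⬝ᵥ
      (hess xstar *ᵥ (x t - xstar))) / 2) (v := D 0 / 2) (by positivity)
      (by rw [(hD 0).2]; linarith)
    linarith
  have hball2 : ∀ t, (x t - xstar) ⬝ᵥ (hess xstar *ᵥ (x t - xstar)) ≤ (D 0 / M) ^ 2 := by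
    intro t
    refine (Real.sqrt_le_left (by positivity)).1 ?_
    rw [le_div_iff₀ hM, mul_comm]
    exact hball t
  have hcoc : ∀ t, (grad (x (t + 1)) - grad (x t)) ⬝ᵥ
      (P⁻¹ *ᵥ (grad (x (t + 1)) - grad (x t))) ≤
      (x (t + 1) - x t) ⬝ᵥ (grad (x (t + 1)) - grad (x t)) := by
    intro t
    have h := gradient_diff_cocoercive hhess hpd hP (x t) (x (t + 1) - x t) (fun τ hτ u => by
      refine smul_hess_quad_le hM hD0 hpd hssc ?_ u
      have h1 := quad_segment_le (hpd xstar) (x t - xstar) (x (t + 1) - x t) hτ (hball2 t)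
        (by rw [show x t - xstar + (x (t + 1) - x t) = x (t + 1) - xstar by abel]
            exact hball2 (t + 1))
      rwa [show x t + τ • (x (t + 1) - x t) - xstar = x t - xstar + τ • (x (t + 1) - x t) by
        abel])
    rwa [add_sub_cancel] at h
  have hΔeq : Δ₁ = Psi d (P⁻¹ * B 0) := by
    rw [hΔ₁, hB0eq]
    congr 1
    have : P⁻¹ = k⁻¹ • (hess xstar)⁻¹ := by
      refine Matrix.inv_eq_left_inv ?_
      rw [hPdef, smul_mul_smul_comm, inv_mul_cancel₀ hk.ne', one_smul,
        posDef_inv_mul (hpd xstar)]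
    rw [this, Matrix.mul_smul, Matrix.mul_one, smul_comm]
  have hΔnn : 0 ≤ Δ₁ := hΔeq ▸ Psi_nonneg hP hB0pd
  set κ := α * (1 - β) / k ^ 2 with hκdef
  have hβ' : 0 < 1 - β := by linarith
  have hκ0 : 0 < κ := by positivity
  have hκ1 : κ < 1 := by
    rw [hκdef, div_lt_one (by positivity)]
    have h1 : 1 ≤ k ^ 2 := one_le_pow₀ hk1
    nlinarith
  have hC0 : 0 < C 0 := by rw [hC]; linarith
  have key : ∀ t : ℕ, 1 ≤ t → C t / C 0 ≤ (1 - κ * Real.exp (-Δ₁ / (t : ℝ))) ^ t := by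
    intro T hT
    have hbase : 0 < 1 - κ * Real.exp (-Δ₁ / (T : ℝ)) := by
      have h1 : Real.exp (-Δ₁ / (T : ℝ)) ≤ 1 := by
        rw [Real.exp_le_one_iff, neg_div]
        have : 0 ≤ Δ₁ / (T : ℝ) := by positivity
        linarith
      nlinarith
    rcases (hCnn T).eq_or_lt with h0 | hpos
    · rw [← h0, zero_div]
      positivity
    have hCpos : ∀ t < T, 0 < f (x t) - f xstar := fun t ht => by
      rw [← hC]; exact hpos.trans_le (hanti ht.le)
    have hgne : ∀ t < T, grad (x t) ≠ 0 := by
      intro t ht hg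
      have h1 := convex_gradient_ineq hf hgrad hhess hpd xstar (x t - xstar)
      rw [add_sub_cancel, hg, zero_dotProduct] at h1
      linarith [hCpos t ht]
    have hG : ∀ t < T, 0 < grad (x t) ⬝ᵥ (P⁻¹ *ᵥ grad (x t)) := fun t ht =>
      posDef_dot_pos hP.inv (hgne t ht)
    rw [div_le_iff₀ hC0, mul_comm]
    refine linear_rate_of_sum_log (lam := fun t =>
      (grad (x t) ⬝ᵥ (x (t + 1) - x t)) ^ 2 / ((grad (x t) ⬝ᵥ (P⁻¹ *ᵥ grad (x t))) *
        ((x (t + 1) - x t) ⬝ᵥ (grad (x (t + 1)) - grad (x t)))))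
      hT hCnn hκ0.le ?_ ?_ ?_ hbase
    · intro t ht
      have h1 := (hcurv t (hBpd t) (hgne t ht)).2.1
      have h2 := hsy t (hBpd t) (hgne t ht)
      have h3 := hG t ht
      have h4 := sq_pos_of_neg h1
      positivity
    · intro t ht
      obtain ⟨-, h1, h2⟩ := hcurv t (hBpd t) (hgne t ht)
      have h3 := step_decrease_arith (Ct := C t) (Cs := C (t + 1)) hα0 hβ hk (neg_pos.2 h1)
        (hsy t (hBpd t) (hgne t ht)) (hG t ht) (by
          rw [hC, hC]; linarith [hfdec t]) h2 (by
          rw [hC]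
          exact gap_le_dual_norm hM hD0 hf hgrad hhess hpd hssc hstar (hball t) (hCpos t ht))
      rwa [neg_sq] at h3
    · -- Telescoping the potential, which stays nonnegative.
      have hpot : ∀ n ≤ T, Psi d (P⁻¹ * B n) ≤ Psi d (P⁻¹ * B 0) +
          ∑ t ∈ Finset.range n, Real.log ((grad (x t) ⬝ᵥ (x (t + 1) - x t)) ^ 2 /
            ((grad (x t) ⬝ᵥ (P⁻¹ *ᵥ grad (x t))) *
            ((x (t + 1) - x t) ⬝ᵥ (grad (x (t + 1)) - grad (x t))))) := by
        intro n
        induction n with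
        | zero => intro _; simp
        | succ n ih =>
          intro hn
          have h1 := ih (by omega)
          have hg := hgne n (by omega)
          have h2 := Psi_bfgsUpdate_le hP (hBpd n) (hη n) (hcurv n (hBpd n) hg).1
            (hsy n (hBpd n) hg) (hcoc n)
          rw [← hBupd n] at h2
          rw [Finset.sum_range_succ]
          linarith
      have h1 := hpot T le_rfl
      have h2 := Psi_nonneg hP (hBpd T)
      rw [← hΔeq] at h1
      linarith
  simp only [← hC]
  refine ⟨fun t ht => ?_, fun t ht => ?_⟩
  · rw [show α * (1 - β) * Real.exp (-Δ₁ / (t : ℝ)) / k ^ 2 =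
      κ * Real.exp (-Δ₁ / (t : ℝ)) by rw [hκdef]; ring]
    exact key t ht
  · rcases Nat.eq_zero_or_pos t with rfl | htpos
    · simp [div_self hC0.ne']
    refine (key t htpos).trans ?_
    have ht0 : (0 : ℝ) < t := by exact_mod_cast htpos
    have hexp : (1 : ℝ) / 3 ≤ Real.exp (-Δ₁ / (t : ℝ)) := by
      have h1 : Real.exp (-1) ≤ Real.exp (-Δ₁ / (t : ℝ)) := by
        refine Real.exp_le_exp.2 ?_
        rw [neg_div, neg_le_neg_iff, div_le_one ht0]
        exact ht
      refine le_trans ?_ h1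
      rw [Real.exp_neg, one_div]
      have := Real.exp_one_lt_d9
      gcongr
      linarith
    have hle1 : Real.exp (-Δ₁ / (t : ℝ)) ≤ 1 := by
      rw [Real.exp_le_one_iff, neg_div]
      have : 0 ≤ Δ₁ / (t : ℝ) := by positivity
      linarith
    rw [show α * (1 - β) / (3 * k ^ 2) = κ * (1 / 3) by rw [hκdef]; field_simp]
    have h0 : 0 ≤ 1 - κ * Real.exp (-Δ₁ / (t : ℝ)) := by nlinarith
    gcongr
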